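/- For every basic set B ⊆ A × A × A, the sequence ln(ln c_n)/n converges as n → ∞, and its limit is either 0 or ln 2. In other words, the entropy of every binary Markov tree-shift over two symbols is either 0 or ln 2. -/

import Mathlib

open Filter Real

/-- The set of `n`-blocks of the binary Markov tree-shift over the alphabet `Fin 2`
(symbols `0,1` standing for `1,2`) with basic set `B` of 2-blocks `(i,j,k)`:
labelings of the binary words of length `< n` such that every node `v` of length
`≤ n-2`, together with its children `v0` and `v1`, forms a pattern in `B`. -/
def Block2 (B : Finset (Fin 2 × Fin 2 × Fin 2)) (n : ℕ) :
    Set ({w : List (Fin 2) // w.length < n} → Fin 2) :=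
  {u | ∀ (v : List (Fin 2)) (h : v.length + 2 ≤ n),
    (u ⟨v, by omega⟩,
     u ⟨v ++ [0], by simp; omega⟩,
     u ⟨v ++ [1], by simp; omega⟩) ∈ B}

/-- The `n`-blocks whose root is labeled `i`. -/
def BlockRoot2 (B : Finset (Fin 2 × Fin 2 × Fin 2)) (i : Fin 2) (n : ℕ) :
    Set ({w : List (Fin 2) // w.length < n} → Fin 2) :=
  {u | u ∈ Block2 B n ∧ ∀ h : 0 < n, u ⟨[], by simpa using h⟩ = i}

/-- Combine a root label and two labelings of subtrees. -/
def glueTree {n : ℕ} (i : Fin 2) (l r : {w : List (Fin 2) // w.length < n + 1} → Fin 2) :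
    {w : List (Fin 2) // w.length < n + 2} → Fin 2
  | ⟨[], _⟩ => i
  | ⟨x :: v, h⟩ => if x = 0 then l ⟨v, by simpa using h⟩ else r ⟨v, by simpa using h⟩

/-- Restriction of a labeling to a child subtree. -/
def childTree {n : ℕ} (x : Fin 2) (u : {w : List (Fin 2) // w.length < n + 2} → Fin 2) :
    {w : List (Fin 2) // w.length < n + 1} → Fin 2 :=
  fun w => u ⟨x :: w.1, by have := w.2; simp; omega⟩

theorem child_mem {B : Finset (Fin 2 × Fin 2 × Fin 2)} {n : ℕ} (x : Fin 2)
    {u : {w : List (Fin 2) // w.length < n + 2} → Fin 2} (hu : u ∈ Block2 B (n + 2)) :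
    childTree x u ∈ Block2 B (n + 1) := by
  intro v h
  exact hu (x :: v) (by simp; omega)

theorem glue_mem {B : Finset (Fin 2 × Fin 2 × Fin 2)} {n : ℕ} {i : Fin 2}
    {l r : {w : List (Fin 2) // w.length < n + 1} → Fin 2}
    (hl : l ∈ Block2 B (n + 1)) (hr : r ∈ Block2 B (n + 1))
    (h : (i, l ⟨[], by simp⟩, r ⟨[], by simp⟩) ∈ B) :
    glueTree i l r ∈ Block2 B (n + 2) := by
  intro v hv
  match v, hv with
  | [], hv => simpa [glueTree] using h
  | x :: v, hv =>
    have hv' : v.length + 2 ≤ n + 1 := by simp at hv; omega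
    by_cases hx : x = 0
    · simpa [glueTree, hx] using hl v hv'
    · simpa [glueTree, hx] using hr v hv'

/-- Decomposition of a block into the two subtrees of its root. -/
noncomputable def blockEquiv (B : Finset (Fin 2 × Fin 2 × Fin 2)) (i : Fin 2) (n : ℕ) :
    BlockRoot2 B i (n + 2) ≃
      Σ q : {q : Fin 2 × Fin 2 // (i, q.1, q.2) ∈ B},
        BlockRoot2 B q.1.1 (n + 1) × BlockRoot2 B q.1.2 (n + 1) where
  toFun u := ⟨⟨(u.1 ⟨[0], by simp⟩, u.1 ⟨[1], by simp⟩), by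
      have h1 := u.2.1 [] (by simp)
      have h2 := u.2.2 (by simp)
      rw [h2] at h1
      exact h1⟩,
    ⟨childTree 0 u.1, child_mem 0 u.2.1, fun _ => rfl⟩,
    ⟨childTree 1 u.1, child_mem 1 u.2.1, fun _ => rfl⟩⟩
  invFun s := ⟨glueTree i s.2.1.1 s.2.2.1, glue_mem s.2.1.2.1 s.2.2.2.1 (by
      rw [s.2.1.2.2 (by simp), s.2.2.2.2 (by simp)]
      exact s.1.2), fun _ => rfl⟩
  left_inv u := by
    apply Subtype.ext
    funext w
    match w with
    | ⟨[], _⟩ => exact (u.2.2 (by simp)).symm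
    | ⟨x :: v, h⟩ =>
      by_cases hx : x = 0
      · subst hx
        simp [glueTree, childTree]
      · have : x = 1 := by omega
        subst this
        simp [glueTree, childTree]
  right_inv s := by
    obtain ⟨⟨⟨j, k⟩, hq⟩, ⟨l, hl⟩, ⟨r, hr⟩⟩ := s
    have h1 : l ⟨[], by simp⟩ = j := hl.2 (by simp)
    have h2 : r ⟨[], by simp⟩ = k := hr.2 (by simp)
    subst h1
    subst h2
    rfl

theorem sum_sub (p : Fin 2 × Fin 2 → Prop) (f : Fin 2 × Fin 2 → ℕ) [DecidablePred p]
    [Fintype {q // p q}] : ∑ x : {q // p q}, f x.1 = ∑ q with p q, f q :=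
  (Finset.sum_subtype _ (by simp) f).symm

open Classical in
theorem card_root_succ (B : Finset (Fin 2 × Fin 2 × Fin 2)) (i : Fin 2) (n : ℕ) :
    Nat.card (BlockRoot2 B i (n + 2)) = ∑ q : Fin 2 × Fin 2,
      if (i, q.1, q.2) ∈ B then
        Nat.card (BlockRoot2 B q.1 (n + 1)) * Nat.card (BlockRoot2 B q.2 (n + 1)) else 0 := by
  have (m : ℕ) : Finite {w : List (Fin 2) // w.length < m} :=
    (List.finite_length_lt (Fin 2) m).to_subtype
  rw [Nat.card_congr (blockEquiv B i n), Nat.card_sigma, ← Finset.sum_filter]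
  simp only [Nat.card_prod]
  exact sum_sub (fun q => (i, q.1, q.2) ∈ B)
    (fun q => Nat.card (BlockRoot2 B q.1 (n + 1)) * Nat.card (BlockRoot2 B q.2 (n + 1)))

theorem card_root_one (B : Finset (Fin 2 × Fin 2 × Fin 2)) (i : Fin 2) :
    Nat.card (BlockRoot2 B i 1) = 1 := by
  rw [Nat.card_eq_one_iff_unique]
  constructor
  · constructor
    rintro ⟨u, hu⟩ ⟨v, hv⟩
    apply Subtype.ext
    funext ⟨w, hw⟩
    have : w = [] := by simpa using hw
    subst this
    exact (hu.2 (by simp)).trans (hv.2 (by simp)).symm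
  · exact ⟨⟨fun _ => i, fun v h => by omega, fun _ => rfl⟩⟩

theorem card_block (B : Finset (Fin 2 × Fin 2 × Fin 2)) (n : ℕ) :
    Nat.card (Block2 B (n + 1)) =
      Nat.card (BlockRoot2 B 0 (n + 1)) + Nat.card (BlockRoot2 B 1 (n + 1)) := by
  have (m : ℕ) : Finite {w : List (Fin 2) // w.length < m} :=
    (List.finite_length_lt (Fin 2) m).to_subtype
  have : Block2 B (n + 1) = BlockRoot2 B 0 (n + 1) ∪ BlockRoot2 B 1 (n + 1) := by
    ext u
    simp only [BlockRoot2, Set.mem_union, Set.mem_ofPred_eq]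
    constructor
    · intro h
      by_cases h0 : u ⟨[], by simp⟩ = 0
      · exact Or.inl ⟨h, fun _ => h0⟩
      · exact Or.inr ⟨h, fun _ => by omega⟩
    · rintro (h | h) <;> exact h.1
  rw [this]
  simp only [Nat.card_coe_set_eq]
  apply Set.ncard_union_eq
  · rw [Set.disjoint_left]
    intro u h0 h1
    have := (h0.2 (by simp)).symm.trans (h1.2 (by simp))
    exact absurd this (by decide)
  · exact Set.toFinite _
  · exact Set.toFinite _

theorem sq_growth (m : ℕ → ℕ) (N : ℕ) (h0 : 2 ≤ m N) (h : ∀ n, N ≤ n → m n * m n ≤ m (n + 1))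
    (n : ℕ) : 2 ^ 2 ^ n ≤ m (n + N) := by
  induction n with
  | zero => simpa using h0
  | succ k ih =>
    calc 2 ^ 2 ^ (k + 1) = 2 ^ 2 ^ k * 2 ^ 2 ^ k := by rw [← pow_add]; congr 1; ring
      _ ≤ m (k + N) * m (k + N) := Nat.mul_le_mul ih ih
      _ ≤ m (k + N + 1) := h _ (by omega)
      _ = m (k + 1 + N) := by congr 1; ring

theorem quad_ge (p1 p2 p3 x y : ℕ) (h : 1 ≤ p1 + p2 + p3) :
    min x y * min x y ≤ p1 * (x * x) + p2 * (x * y) + p3 * (y * y) := by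
  have hx := min_le_left x y
  have hy := min_le_right x y
  have h1 := Nat.mul_le_mul hx hx
  have h2 := Nat.mul_le_mul hx hy
  have h3 := Nat.mul_le_mul hy hy
  calc min x y * min x y ≤ (p1 + p2 + p3) * (min x y * min x y) := Nat.le_mul_of_pos_left _ h
    _ = p1 * (min x y * min x y) + p2 * (min x y * min x y) + p3 * (min x y * min x y) := by ring
    _ ≤ _ := by gcongr

theorem min_growth (a b : ℕ → ℕ) (p1 p2 p3 q1 q2 q3 : ℕ)
    (ha : ∀ n, a (n + 1) = p1 * (a n * a n) + p2 * (a n * b n) + p3 * (b n * b n))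
    (hb : ∀ n, b (n + 1) = q1 * (a n * a n) + q2 * (a n * b n) + q3 * (b n * b n))
    (hP : 1 ≤ p1 + p2 + p3) (hQ : 1 ≤ q1 + q2 + q3) (N : ℕ) (h1 : 2 ≤ a N) (h2 : 2 ≤ b N)
    (n : ℕ) : 2 ^ 2 ^ n ≤ a (n + N) + b (n + N) := by
  have := sq_growth (fun n => min (a n) (b n)) N (le_min h1 h2) (fun n _ => by
    apply le_min
    · rw [ha]; exact quad_ge _ _ _ _ _ hP
    · rw [hb]; exact quad_ge _ _ _ _ _ hQ) n
  have h3 := min_le_left (a (n + N)) (b (n + N))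
  have := this.trans h3
  omega

theorem half_dichotomy (a b : ℕ → ℕ) (p1 p2 p3 q1 q2 q3 : ℕ)
    (a0 : a 0 = 1) (b0 : b 0 = 1)
    (ha : ∀ n, a (n + 1) = p1 * (a n * a n) + p2 * (a n * b n) + p3 * (b n * b n))
    (hb : ∀ n, b (n + 1) = q1 * (a n * a n) + q2 * (a n * b n) + q3 * (b n * b n))
    (hq1 : q1 ≤ 1) (hq2 : q2 ≤ 2) (hq3 : q3 ≤ 1) (hP : p1 + p2 + p3 ≤ 1) :
    (∃ N, ∀ n, 2 ^ 2 ^ n ≤ a (n + N) + b (n + N)) ∨ ∀ n, a n + b n ≤ 2 ^ (n + 1) := by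
  have a1 : a 1 = p1 + p2 + p3 := by rw [ha 0, a0, b0]; ring
  have b1 : b 1 = q1 + q2 + q3 := by rw [hb 0, a0, b0]; ring
  have hpow : ∀ n : ℕ, 2 ≤ 2 ^ (n + 1) := fun n => by
    rw [pow_succ]; have := Nat.one_le_two_pow (n := n); omega
  by_cases hP0 : p1 + p2 + p3 = 0
  · obtain ⟨rfl, rfl, rfl⟩ : p1 = 0 ∧ p2 = 0 ∧ p3 = 0 := by omega
    have hA : ∀ n, a (n + 1) = 0 := fun n => by rw [ha]; simp
    have hB : ∀ n, b (n + 2) = q3 * (b (n + 1) * b (n + 1)) := fun n => by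
      rw [hb, hA]; simp
    by_cases hq : q3 = 0
    · right
      subst hq
      intro n
      match n with
      | 0 => simp [a0, b0]
      | 1 => rw [hA, b1]; norm_num; omega
      | n + 2 => rw [hA, hB]; simp
    · obtain rfl : q3 = 1 := by omega
      by_cases h2 : 2 ≤ b 1
      · left
        refine ⟨1, fun n => ?_⟩
        have := sq_growth b 1 h2 (fun n hn => by
          obtain ⟨k, rfl⟩ : ∃ k, n = k + 1 := ⟨n - 1, by omega⟩
          rw [hB]; simp) n
        omega
      · right
        have hb1 : b 1 = 1 := by omega
        have : ∀ n, b (n + 1) = 1 := by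
          intro n
          induction n with
          | zero => exact hb1
          | succ k ih => rw [hB, ih]
        intro n
        match n with
        | 0 => simp [a0, b0]
        | n + 1 => rw [hA, this]; have := hpow (n + 1); omega
  by_cases hQ0 : q1 + q2 + q3 = 0
  · -- then b vanishes, a is at most 1
    obtain ⟨rfl, rfl, rfl⟩ : q1 = 0 ∧ q2 = 0 ∧ q3 = 0 := by omega
    have hB : ∀ n, b (n + 1) = 0 := fun n => by rw [hb]; simp
    have hA : ∀ n, a (n + 1) ≤ 1 := by
      intro n
      induction n with
      | zero => rw [zero_add]; omega
      | succ k ih =>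
        rw [ha, hB]
        have h1 : p1 ≤ 1 := by omega
        have := Nat.mul_le_mul h1 (Nat.mul_le_mul ih ih)
        simpa using this
    right
    intro n
    match n with
    | 0 => simp [a0, b0]
    | n + 1 => have := hpow (n + 1); have := hA n; rw [hB]; omega
  by_cases hQ1 : q1 + q2 + q3 = 1
  · right
    have : ∀ n, a n = 1 ∧ b n = 1 := by
      intro n
      induction n with
      | zero => exact ⟨a0, b0⟩
      | succ k ih => rw [ha, hb, ih.1, ih.2]; omega
    intro n
    rw [(this n).1, (this n).2]
    exact hpow n
  by_cases hp1 : p1 = 1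
  · obtain ⟨rfl, rfl⟩ : p2 = 0 ∧ p3 = 0 := by omega
    subst hp1
    have hA : ∀ n, a n = 1 := by
      intro n
      induction n with
      | zero => exact a0
      | succ k ih => rw [ha, ih]; simp
    by_cases hq : q3 = 0
    · right
      subst hq
      have : ∀ n, b n + 1 ≤ 2 ^ (n + 1) := by
        intro n
        induction n with
        | zero => simp [b0]
        | succ k ih =>
          rw [hb, hA, pow_succ]
          have := Nat.mul_le_mul_right (b k) hq2
          simp only [one_mul, mul_one, zero_mul, add_zero]
          omega
      intro n
      have := this n
      rw [hA]; omega
    · left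
      obtain rfl : q3 = 1 := by omega
      refine ⟨1, fun n => ?_⟩
      have := sq_growth b 1 (by omega) (fun n _ => by rw [hb, one_mul]; exact Nat.le_add_left _ _) n
      omega
  · left
    have hb2 : 2 ≤ b 1 := by omega
    have ha1 : a 1 = 1 := by omega
    refine ⟨2, min_growth a b p1 p2 p3 q1 q2 q3 ha hb (by omega) (by omega) 2 ?_ ?_⟩
    · rw [ha, ha1]
      obtain rfl : p1 = 0 := by omega
      have : p2 = 1 ∧ p3 = 0 ∨ p2 = 0 ∧ p3 = 1 := by omega
      rcases this with ⟨rfl, rfl⟩ | ⟨rfl, rfl⟩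
      · omega
      · nlinarith
    · have h := quad_ge q1 q2 q3 1 1 (by omega)
      rw [hb, ha1]
      have e1 : q2 * 1 ≤ q2 * (1 * b 1) := Nat.mul_le_mul_left _ (by omega)
      have e2 : q3 * 1 ≤ q3 * (b 1 * b 1) := Nat.mul_le_mul_left _ (by nlinarith)
      omega

theorem count_dichotomy (a b : ℕ → ℕ) (p1 p2 p3 q1 q2 q3 : ℕ)
    (a0 : a 0 = 1) (b0 : b 0 = 1)
    (ha : ∀ n, a (n + 1) = p1 * (a n * a n) + p2 * (a n * b n) + p3 * (b n * b n))
    (hb : ∀ n, b (n + 1) = q1 * (a n * a n) + q2 * (a n * b n) + q3 * (b n * b n))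
    (hp1 : p1 ≤ 1) (hp2 : p2 ≤ 2) (hp3 : p3 ≤ 1)
    (hq1 : q1 ≤ 1) (hq2 : q2 ≤ 2) (hq3 : q3 ≤ 1) :
    (∃ N, ∀ n, 2 ^ 2 ^ n ≤ a (n + N) + b (n + N)) ∨ ∀ n, a n + b n ≤ 2 ^ (n + 1) := by
  by_cases hP : p1 + p2 + p3 ≤ 1
  · exact half_dichotomy a b p1 p2 p3 q1 q2 q3 a0 b0 ha hb hq1 hq2 hq3 hP
  by_cases hQ : q1 + q2 + q3 ≤ 1
  · have := half_dichotomy b a q3 q2 q1 p3 p2 p1 b0 a0 (fun n => by rw [hb]; ring)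
      (fun n => by rw [ha]; ring) hp3 hp2 hp1 (by omega)
    simpa only [add_comm (b _) (a _)] using this
  · left
    refine ⟨1, min_growth a b p1 p2 p3 q1 q2 q3 ha hb (by omega) (by omega) 1 ?_ ?_⟩
    · rw [ha 0, a0, b0]; omega
    · rw [hb 0, a0, b0]; omega

theorem card_le (a b : ℕ → ℕ) (p1 p2 p3 q1 q2 q3 : ℕ)
    (a0 : a 0 = 1) (b0 : b 0 = 1)
    (ha : ∀ n, a (n + 1) = p1 * (a n * a n) + p2 * (a n * b n) + p3 * (b n * b n))
    (hb : ∀ n, b (n + 1) = q1 * (a n * a n) + q2 * (a n * b n) + q3 * (b n * b n))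
    (hp1 : p1 ≤ 1) (hp2 : p2 ≤ 2) (hp3 : p3 ≤ 1)
    (hq1 : q1 ≤ 1) (hq2 : q2 ≤ 2) (hq3 : q3 ≤ 1) (n : ℕ) :
    2 * (a n + b n) ≤ 4 ^ 2 ^ n := by
  induction n with
  | zero => simp [a0, b0]
  | succ k ih =>
    have e1 := Nat.mul_le_mul_right (a k * a k) hp1
    have e2 := Nat.mul_le_mul_right (a k * b k) hp2
    have e3 := Nat.mul_le_mul_right (b k * b k) hp3
    have f1 := Nat.mul_le_mul_right (a k * a k) hq1
    have f2 := Nat.mul_le_mul_right (a k * b k) hq2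
    have f3 := Nat.mul_le_mul_right (b k * b k) hq3
    calc 2 * (a (k + 1) + b (k + 1)) ≤ (2 * (a k + b k)) * (2 * (a k + b k)) := by
          rw [ha, hb]; nlinarith
      _ ≤ 4 ^ 2 ^ k * 4 ^ 2 ^ k := Nat.mul_le_mul ih ih
      _ = 4 ^ 2 ^ (k + 1) := by rw [← pow_add]; congr 1; ring

theorem limit_log_two (c : ℕ → ℕ) (M : ℕ) (hlow : ∀ n, 2 ^ 2 ^ n ≤ c (n + M))
    (hup : ∀ n, c (n + 1) ≤ 4 ^ 2 ^ n) :
    Tendsto (fun n : ℕ => Real.log (Real.log (c n)) / n) atTop (nhds (Real.log 2)) := by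
  have hl2 : 0 < Real.log 2 := Real.log_pos (by norm_num)
  have key : ∀ K : ℝ, Tendsto (fun n : ℕ => Real.log 2 + K / n) atTop (nhds (Real.log 2)) := by
    intro K
    simpa using tendsto_const_nhds.add (tendsto_const_div_atTop_nhds_zero_nat K)
  refine tendsto_of_tendsto_of_tendsto_of_le_of_le'
    (key (Real.log (Real.log 2) - M * Real.log 2)) (key (Real.log (Real.log 4) - Real.log 2)) ?_ ?_
  · filter_upwards [eventually_ge_atTop (M + 1)] with n hn
    obtain ⟨k, rfl⟩ : ∃ k, n = k + M := ⟨n - M, by omega⟩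
    have hpos : (0 : ℝ) < ((k + M : ℕ) : ℝ) := by exact_mod_cast (by omega)
    rw [← sub_nonneg]
    have h1 : (2 : ℝ) ^ 2 ^ k ≤ (c (k + M) : ℝ) := by exact_mod_cast hlow k
    have h2 : (2 : ℝ) ^ k * Real.log 2 ≤ Real.log (c (k + M)) := by
      have := Real.log_le_log (by positivity) h1
      rw [Real.log_pow] at this
      exact_mod_cast this
    have h3 := Real.log_le_log (by positivity) h2
    rw [Real.log_mul (by positivity) hl2.ne', Real.log_pow] at h3
    rw [sub_nonneg, ← sub_nonneg]
    have : Real.log (Real.log (c (k + M))) / ((k + M : ℕ) : ℝ) - (Real.log 2 +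
        (Real.log (Real.log 2) - M * Real.log 2) / ((k + M : ℕ) : ℝ)) =
        (Real.log (Real.log (c (k + M))) - (k * Real.log 2 + Real.log (Real.log 2))) /
          ((k + M : ℕ) : ℝ) := by
      field_simp
      push_cast
      ring
    rw [this]
    exact div_nonneg (by linarith) hpos.le
  · filter_upwards [eventually_ge_atTop (M + 1)] with n hn
    obtain ⟨j, hj⟩ : ∃ j, n = j + M := ⟨n - M, by omega⟩
    obtain ⟨k, rfl⟩ : ∃ k, n = k + 1 := ⟨n - 1, by omega⟩
    have hpos : (0 : ℝ) < ((k + 1 : ℕ) : ℝ) := by positivity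
    have hc : 2 ≤ c (k + 1) := by
      rw [hj]
      exact le_trans (by simpa using Nat.pow_le_pow_right (n := 2) (by norm_num) (Nat.one_le_two_pow (n := j))) (hlow j)
    have hc' : (1 : ℝ) < c (k + 1) := by exact_mod_cast hc
    have h1 : (c (k + 1) : ℝ) ≤ (4 : ℝ) ^ 2 ^ k := by exact_mod_cast hup k
    have h2 : Real.log (c (k + 1)) ≤ (2 : ℝ) ^ k * Real.log 4 := by
      have := Real.log_le_log (by linarith) h1
      rw [Real.log_pow] at this
      exact_mod_cast this
    have h3 := Real.log_le_log (Real.log_pos hc') h2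
    rw [Real.log_mul (by positivity) (Real.log_pos (by norm_num)).ne', Real.log_pow] at h3
    rw [← sub_nonneg]
    have : Real.log 2 + (Real.log (Real.log 4) - Real.log 2) / ((k + 1 : ℕ) : ℝ) -
        Real.log (Real.log (c (k + 1))) / ((k + 1 : ℕ) : ℝ) =
        (k * Real.log 2 + Real.log (Real.log 4) - Real.log (Real.log (c (k + 1)))) /
          ((k + 1 : ℕ) : ℝ) := by
      field_simp
      push_cast
      ring
    rw [this]
    exact div_nonneg (by linarith) hpos.le

theorem limit_zero (c : ℕ → ℕ) (hup : ∀ n, c (n + 1) ≤ 2 ^ (n + 1)) :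
    Tendsto (fun n : ℕ => Real.log (Real.log (c n)) / n) atTop (nhds 0) := by
  have hl2 : 0 < Real.log 2 := Real.log_pos (by norm_num)
  have hl2' : Real.log 2 < 1 := by have := Real.log_two_lt_d9; linarith
  have hneg : Real.log (Real.log 2) < 0 := Real.log_neg hl2 hl2'
  have key : Tendsto (fun n : ℕ => Real.log n / n) atTop (nhds 0) := by
    have := (Real.isLittleO_log_id_atTop.tendsto_div_nhds_zero).comp tendsto_natCast_atTop_atTop
    exact this
  refine tendsto_of_tendsto_of_tendsto_of_le_of_le'
    (tendsto_const_div_atTop_nhds_zero_nat (Real.log (Real.log 2))) key ?_ ?_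
  · filter_upwards with n
    apply div_le_div_of_nonneg_right _ (Nat.cast_nonneg n)
    rcases Nat.lt_or_ge (c n) 2 with h | h
    · interval_cases c n <;> simp [hneg.le]
    · apply Real.log_le_log hl2
      apply Real.log_le_log (by norm_num)
      exact_mod_cast h
  · filter_upwards [eventually_ge_atTop 1] with n hn
    apply div_le_div_of_nonneg_right _ (Nat.cast_nonneg n)
    have hn' : (1 : ℝ) ≤ n := by exact_mod_cast hn
    rcases Nat.lt_or_ge (c n) 2 with h | h
    · have := Real.log_nonneg hn'
      interval_cases c n <;> simp [this]
    · have hc' : (1 : ℝ) < c n := by exact_mod_cast h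
      apply Real.log_le_log (Real.log_pos hc')
      obtain ⟨k, rfl⟩ : ∃ k, n = k + 1 := ⟨n - 1, by omega⟩
      have h1 : (c (k + 1) : ℝ) ≤ (2 : ℝ) ^ (k + 1) := by exact_mod_cast hup k
      have := Real.log_le_log (by linarith) h1
      rw [Real.log_pow] at this
      nlinarith

/-- For every basic set `B` over two symbols on binary trees, the entropy limit
`lim_n ln(ln c_n)/n` exists and equals `0` or `ln 2`. -/
theorem binary_markov_entropy_dichotomy (B : Finset (Fin 2 × Fin 2 × Fin 2)) :
    ∃ h : ℝ,
      Tendsto (fun n : ℕ => Real.log (Real.log (Nat.card (Block2 B n))) / n)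
        atTop (nhds h) ∧ (h = 0 ∨ h = Real.log 2) := by
  classical
  let t : Fin 2 → Fin 2 → Fin 2 → ℕ := fun i j k => if (i, j, k) ∈ B then 1 else 0
  have ht : ∀ i j k, t i j k ≤ 1 := fun i j k => by simp only [t]; split_ifs <;> simp
  let r : Fin 2 → ℕ → ℕ := fun i n => Nat.card (BlockRoot2 B i (n + 1))
  have hr0 : ∀ i, r i 0 = 1 := fun i => card_root_one B i
  have hr : ∀ i n, r i (n + 1) = t i 0 0 * (r 0 n * r 0 n)
      + (t i 0 1 + t i 1 0) * (r 0 n * r 1 n) + t i 1 1 * (r 1 n * r 1 n) := by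
    intro i n
    have := card_root_succ B i n
    rw [Fintype.sum_prod_type] at this
    simp only [Fin.sum_univ_two] at this
    simp only [r, t]
    rw [this]
    split_ifs <;> ring
  have h2 : ∀ i, t i 0 1 + t i 1 0 ≤ 2 := fun i => by
    have := ht i 0 1; have := ht i 1 0; omega
  have hc : ∀ n, Nat.card (Block2 B (n + 1)) = r 0 n + r 1 n := fun n => card_block B n
  have hup := card_le (r 0) (r 1) _ _ _ _ _ _ (hr0 0) (hr0 1) (hr 0) (hr 1) (ht _ _ _) (h2 _)
    (ht _ _ _) (ht _ _ _) (h2 _) (ht _ _ _)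
  rcases count_dichotomy (r 0) (r 1) _ _ _ _ _ _ (hr0 0) (hr0 1) (hr 0) (hr 1) (ht _ _ _) (h2 _)
    (ht _ _ _) (ht _ _ _) (h2 _) (ht _ _ _) with ⟨N, hN⟩ | h
  · refine ⟨Real.log 2, limit_log_two (fun n => Nat.card (Block2 B n)) (N + 1) (fun n => ?_)
      (fun n => ?_), Or.inr rfl⟩
    · have := hN n
      rw [← hc] at this
      exact this
    · have := hup n
      rw [← hc] at this
      omega
  · refine ⟨0, limit_zero (fun n => Nat.card (Block2 B n)) (fun n => ?_), Or.inl rfl⟩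
    have := h n
    rw [← hc] at this
    exact this
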